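/- If 𝒻 and 𝒢 are regular families, then ι(𝒻[𝒢]) = ι(𝒢)·ι(𝒻), where 𝒻[𝒢] = {⋃_{i=1}^s E_i : E_1 < ... < E_s, each E_i ∈ 𝒢, and (min E_1,...,min E_s) ∈ 𝒻}. -/

import Mathlib

open Ordinal

/-- A family of finite subsets of `ℕ` is hereditary if it contains all subsets of
its members. -/
def IsHereditary (F : Set (Finset ℕ)) : Prop := ∀ E ∈ F, ∀ G ⊆ E, G ∈ F

/-- A family of finite subsets of `ℕ` is spreading if it is closed under replacing
the elements of a member by larger ones, preserving the order. -/
def IsSpreading (F : Set (Finset ℕ)) : Prop :=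
  ∀ E ∈ F, ∀ f : ℕ → ℕ, StrictMonoOn f (E : Set ℕ) → (∀ n ∈ E, n ≤ f n) →
    E.image f ∈ F

/-- A family of finite subsets of `ℕ` is regular if it is compact (as a subset of
the Cantor set `2^ℕ`, identifying sets with their indicator functions), spreading
and hereditary. -/
def IsRegularFamily (F : Set (Finset ℕ)) : Prop :=
  IsCompact ((fun (E : Finset ℕ) (n : ℕ) => decide (n ∈ E)) '' F) ∧
    IsSpreading F ∧ IsHereditary F

/-- The derivative of a family: remove the maximal elements (those admitting no
extension by a larger element within the family). -/
def famDeriv (F : Set (Finset ℕ)) : Set (Finset ℕ) :=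
  {E ∈ F | ∃ n : ℕ, (∀ m ∈ E, m < n) ∧ insert n E ∈ F}

/-- Transfinite iterates of the family derivative. -/
noncomputable def famIter (F : Set (Finset ℕ)) (ξ : Ordinal) : Set (Finset ℕ) :=
  Ordinal.limitRecOn ξ F (fun _ ih => famDeriv ih)
    (fun o _ ih => ⋂ (ζ : Set.Iio o), ih ζ.1 ζ.2)

/-- The Cantor–Bendixson-type index of a family: the least ordinal `ξ` such that
`d^ξ(F) ⊆ {∅}`. -/
noncomputable def famIota (F : Set (Finset ℕ)) : Ordinal :=
  sInf {ξ : Ordinal | famIter F ξ ⊆ {(∅ : Finset ℕ)}}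

/-- The "sum" `(𝒻,𝒢)` of two families: all unions `E ∪ F` with `E ∈ 𝒻`, `F ∈ 𝒢`
and `max E < min F`, together with `𝒻` and `𝒢`. -/
def famSum (F G : Set (Finset ℕ)) : Set (Finset ℕ) :=
  {H : Finset ℕ | ∃ E ∈ F, ∃ E' ∈ G, (∀ m ∈ E, ∀ n ∈ E', m < n) ∧ H = E ∪ E'} ∪ F ∪ G

/-- The "product" `𝒻[𝒢]` of two families: unions of `𝒻`-admissible sequences of
members of `𝒢`, i.e. `E_1 < … < E_s` with each `E_i ∈ 𝒢` and `(min E_i)_i ∈ 𝒻`. -/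
def famProd (F G : Set (Finset ℕ)) : Set (Finset ℕ) :=
  {H : Finset ℕ | ∃ l : List {E : Finset ℕ // E.Nonempty},
    l ≠ [] ∧ (∀ E ∈ l, (E : Finset ℕ) ∈ G) ∧
    l.Chain' (fun E E' => ∀ m ∈ (E : Finset ℕ), ∀ n ∈ (E' : Finset ℕ), m < n) ∧
    (l.map fun E => E.1.min' E.2).toFinset ∈ F ∧
    H = l.foldr (fun E acc => E.1 ∪ acc) ∅}

universe u

theorem mem_famIter_iff (F : Set (Finset ℕ)) (ξ : Ordinal.{u}) (E : Finset ℕ) :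
    E ∈ famIter F ξ ↔
      E ∈ F ∧ ∀ ζ < ξ, ∃ n, (∀ m ∈ E, m < n) ∧ insert n E ∈ famIter F ζ := by
  have hzero : famIter.{u} F 0 = F := by
    unfold famIter
    rw [Ordinal.limitRecOn_zero]
  have hsucc (ξ : Ordinal.{u}) : famIter F (ξ + 1) = famDeriv (famIter F ξ) := by
    unfold famIter
    rw [Ordinal.limitRecOn_add_one]
  have hlim (ξ : Ordinal.{u}) (h : Order.IsSuccLimit ξ) :
      famIter F ξ = ⋂ ζ : Set.Iio ξ, famIter F ζ.1 := by
    unfold famIter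
    rw [Ordinal.limitRecOn_limit _ _ _ _ h]
  induction ξ using Ordinal.limitRecOn with
  | zero => simp [hzero]
  | add_one ξ ih =>
    rw [hsucc]
    constructor
    · rintro ⟨hE, hn⟩
      obtain ⟨hEF, h⟩ := ih.1 hE
      refine ⟨hEF, fun ζ hζ => ?_⟩
      rcases (Order.lt_add_one_iff.1 hζ).lt_or_eq with h' | rfl
      exacts [h ζ h', hn]
    · rintro ⟨hE, h⟩
      exact ⟨ih.2 ⟨hE, fun ζ hζ => h ζ (Order.lt_add_one_iff.2 hζ.le)⟩,
        h ξ (Order.lt_add_one_iff.2 le_rfl)⟩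
  | limit ξ hξ ih =>
    rw [hlim ξ hξ, Set.mem_iInter]
    constructor
    · intro h
      have h0 : (0 : Ordinal) < ξ := hξ.bot_lt
      refine ⟨((ih 0 h0).1 (h ⟨0, h0⟩)).1, fun ζ hζ => ?_⟩
      have h1 := h ⟨ζ + 1, hξ.add_one_lt hζ⟩
      rw [hsucc] at h1
      exact h1.2
    · rintro ⟨hE, h⟩ ⟨ζ, hζ⟩
      exact (ih ζ hζ).2 ⟨hE, fun η hη => h η (hη.trans hζ)⟩

/-- `IsChild F E' E` says that `E'` is a member of `F` obtained from `E` by adding one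
element above all the elements of `E`. -/
def IsChild (F : Set (Finset ℕ)) (E' E : Finset ℕ) : Prop :=
  E' ∈ F ∧ ∃ n, (∀ m ∈ E, m < n) ∧ E' = insert n E

theorem isWellFounded_isChild {F : Set (Finset ℕ)}
    (hF : IsCompact ((fun (E : Finset ℕ) (n : ℕ) => decide (n ∈ E)) '' F)) :
    IsWellFounded (Finset ℕ) (IsChild F) := by
  refine ⟨wellFounded_iff_isEmpty_descending_chain.2 ⟨?_⟩⟩
  rintro ⟨f, hf⟩
  have hmono : Monotone f := monotone_nat_of_le_succ fun k => by
    obtain ⟨-, n, -, h⟩ := hf k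
    rw [h]
    exact Finset.subset_insert n _
  have hcard (k : ℕ) : k ≤ (f k).card := by
    induction k with
    | zero => exact Nat.zero_le _
    | succ k ih =>
      obtain ⟨-, n, hn, h⟩ := hf k
      rw [h, Finset.card_insert_of_notMem fun hm => (hn n hm).false]
      lia
  classical
  have htend : Filter.Tendsto (fun k n => decide (n ∈ f (k + 1))) Filter.atTop
      (nhds fun n => decide (∃ k, n ∈ f k)) := by
    refine tendsto_pi_nhds.2 fun n => tendsto_const_nhds.congr' ?_
    by_cases h : ∃ k, n ∈ f k
    · obtain ⟨k, hk⟩ := h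
      filter_upwards [Filter.eventually_ge_atTop k] with j hj
      simp only [decide_eq_decide]
      exact ⟨fun _ => hmono (hj.trans j.le_succ) hk, fun h => ⟨_, h⟩⟩
    · refine Filter.Eventually.of_forall fun j => ?_
      simp only [decide_eq_decide]
      exact ⟨fun h' => absurd h' h, fun h => ⟨_, h⟩⟩
  obtain ⟨E, -, hE⟩ := hF.isClosed.mem_of_tendsto htend
    (Filter.Eventually.of_forall fun k => ⟨_, (hf k).1, rfl⟩)
  have hsub : f (E.card + 1) ⊆ E := fun n hn => by
    have := congrFun hE n
    simp only [decide_eq_decide] at this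
    exact this.2 ⟨_, hn⟩
  have h1 := hcard (E.card + 1)
  have h2 := Finset.card_le_card hsub
  lia

/-- The rank of a finite set in the tree of members of `F` ordered by end extension. -/
noncomputable def treeRank (F : Set (Finset ℕ)) [IsWellFounded (Finset ℕ) (IsChild F)]
    (E : Finset ℕ) : Ordinal.{u} :=
  Ordinal.lift.{u} (IsWellFounded.rank (IsChild F) E)

section treeRank

variable {F : Set (Finset ℕ)} [IsWellFounded (Finset ℕ) (IsChild F)]

theorem treeRank_insert_lt {E : Finset ℕ} {n : ℕ} (hn : ∀ m ∈ E, m < n)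
    (h : insert n E ∈ F) : treeRank.{u} F (insert n E) < treeRank.{u} F E :=
  Ordinal.lift_lt.2 (IsWellFounded.rank_lt_of_rel ⟨h, n, hn, rfl⟩)

theorem exists_le_treeRank_insert {E : Finset ℕ} {γ : Ordinal.{u}} (h : γ < treeRank F E) :
    ∃ n, (∀ m ∈ E, m < n) ∧ insert n E ∈ F ∧ γ ≤ treeRank F (insert n E) := by
  obtain ⟨γ, h', rfl⟩ := Ordinal.lt_lift_iff.1 h
  rw [IsWellFounded.rank_eq, Ordinal.lt_iSup_iff] at h'
  obtain ⟨⟨_, hF, n, hn, rfl⟩, h'⟩ := h'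
  exact ⟨n, hn, hF, Ordinal.lift_le.2 (Order.lt_succ_iff.1 h')⟩

theorem mem_famIter_iff_le_treeRank {E : Finset ℕ} {ξ : Ordinal.{u}} :
    E ∈ famIter F ξ ↔ E ∈ F ∧ ξ ≤ treeRank F E := by
  induction ξ using WellFoundedLT.induction generalizing E with
  | ind ξ ih =>
  rw [mem_famIter_iff]
  refine and_congr_right fun _ => ⟨fun h => le_of_forall_lt fun ζ hζ => ?_, fun h ζ hζ => ?_⟩
  · obtain ⟨n, hn, h⟩ := h ζ hζ
    obtain ⟨hF, h⟩ := (ih ζ hζ).1 h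
    exact h.trans_lt (treeRank_insert_lt hn hF)
  · obtain ⟨n, hn, hF, h⟩ := exists_le_treeRank_insert (hζ.trans_le h)
    exact ⟨n, hn, (ih ζ hζ).2 ⟨hF, h⟩⟩

theorem treeRank_lt_treeRank_empty (hF : IsHereditary F) {E : Finset ℕ} (hE : E ∈ F)
    (hne : E.Nonempty) : treeRank.{u} F E < treeRank.{u} F ∅ := by
  induction E using Finset.induction_on_max with
  | empty => simp at hne
  | insert n s hn ih =>
    have h := treeRank_insert_lt.{u} hn hE
    rcases s.eq_empty_or_nonempty with rfl | hs
    · exact h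
    · exact h.trans (ih (hF _ hE _ (Finset.subset_insert n s)) hs)

theorem treeRank_le_treeRank_image (hF : IsSpreading F) {f : ℕ → ℕ} (hf : StrictMono f)
    (E : Finset ℕ) : treeRank.{u} F E ≤ treeRank.{u} F (E.image f) := by
  induction E using IsWellFounded.induction (IsChild F) with
  | ind E ih =>
  refine le_of_forall_lt fun γ hγ => ?_
  obtain ⟨n, hn, hnF, h⟩ := exists_le_treeRank_insert hγ
  have h' := h.trans (ih _ ⟨hnF, n, hn, rfl⟩)
  have hF' := hF _ hnF f (hf.strictMonoOn _) fun _ _ => hf.le_apply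
  rw [Finset.image_insert] at h' hF'
  refine h'.trans_lt (treeRank_insert_lt ?_ hF')
  simp only [Finset.mem_image]
  rintro _ ⟨m, hm, rfl⟩
  exact hf (hn m hm)

theorem IsSpreading.insert_mono (hF : IsSpreading F) {E : Finset ℕ} {n k : ℕ}
    (hn : ∀ m ∈ E, m < n) (hnk : n ≤ k) (h : insert n E ∈ F) :
    insert k E ∈ F ∧ treeRank.{u} F (insert n E) ≤ treeRank.{u} F (insert k E) := by
  have hf : StrictMono fun x => if x < n then x else x + (k - n) := by
    intro a b hab
    dsimp only
    split_ifs <;> lia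
  have himage : (insert n E).image (fun x => if x < n then x else x + (k - n)) = insert k E := by
    rw [Finset.image_insert]
    congr 1
    · simp [hnk]
    · refine (Finset.image_congr fun x hx => ?_).trans Finset.image_id
      simp [hn x hx]
  rw [← himage]
  exact ⟨hF _ h _ (hf.strictMonoOn _) fun _ _ => hf.le_apply, treeRank_le_treeRank_image hF hf _⟩

theorem famIota_eq_treeRank_empty (hF : IsHereditary F) :
    famIota.{u} F = treeRank.{u} F ∅ := by
  have h : {ξ : Ordinal.{u} | famIter F ξ ⊆ {(∅ : Finset ℕ)}} = Set.Ici (treeRank.{u} F ∅) := by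
    ext ξ
    change famIter F ξ ⊆ {∅} ↔ treeRank F ∅ ≤ ξ
    constructor
    · intro h
      by_contra! hlt
      obtain ⟨n, -, hnF, hn⟩ := exists_le_treeRank_insert hlt
      exact Finset.insert_ne_empty _ _ (h (mem_famIter_iff_le_treeRank.2 ⟨hnF, hn⟩))
    · intro h E hE
      obtain ⟨hEF, hξ⟩ := mem_famIter_iff_le_treeRank.1 hE
      by_contra hne
      exact ((h.trans hξ).trans_lt (treeRank_lt_treeRank_empty hF hEF
        (Finset.nonempty_iff_ne_empty.2 hne))).false
  rw [famIota, h, csInf_Ici]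

end treeRank

/-- `IsPartition G N H` says that cutting `H` before each element of `N` produces
consecutive blocks belonging to `G`, with `N` as the set of their minima. -/
structure IsPartition (G : Set (Finset ℕ)) (N H : Finset ℕ) : Prop where
  subset : N ⊆ H
  exists_le : ∀ h ∈ H, ∃ m ∈ N, m ≤ h
  filter_mem : ∀ a b, (∀ x ∈ N, a < x → b < x) → H.filter (fun x => a ≤ x ∧ x ≤ b) ∈ G

namespace IsPartition

variable {G : Set (Finset ℕ)} {N H : Finset ℕ} {e n : ℕ}

theorem singleton (hG : IsHereditary G) (hn : {n} ∈ G) : IsPartition G {n} {n} where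
  subset := subset_rfl
  exists_le h hh := ⟨h, hh, le_rfl⟩
  filter_mem _ _ _ := hG _ hn _ (Finset.filter_subset _ _)

theorem lastBlock_mem (h : IsPartition G N H) (he : IsGreatest (N : Set ℕ) e) :
    H.filter (e ≤ ·) ∈ G := by
  convert h.filter_mem e (H.sup id) fun x hx hex => absurd hex (he.2 hx).not_gt using 1
  ext x
  simp only [Finset.mem_filter]
  exact ⟨fun h => ⟨h.1, h.2, Finset.le_sup (f := id) h.1⟩, fun h => ⟨h.1, h.2.1⟩⟩

/-- Adding an element to the last block. -/
theorem insert_of_mem (hG : IsHereditary G) (h : IsPartition G N H)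
    (he : IsGreatest (N : Set ℕ) e) (hn : ∀ m ∈ H, m < n)
    (hmem : insert n (H.filter (e ≤ ·)) ∈ G) : IsPartition G N (insert n H) where
  subset := h.subset.trans (Finset.subset_insert n H)
  exists_le x hx := by
    rcases Finset.mem_insert.1 hx with rfl | hx
    · exact ⟨e, he.1, (hn e (h.subset he.1)).le⟩
    · exact h.exists_le x hx
  filter_mem a b hab := by
    by_cases hnb : n ≤ b
    · refine hG _ hmem _ fun x hx => ?_
      have hea : e ≤ a := by
        by_contra! hae
        exact ((hab e he.1 hae).trans_le ((hn e (h.subset he.1)).le.trans hnb)).false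
      simp only [Finset.mem_filter, Finset.mem_insert] at hx ⊢
      exact hx.1.imp_right fun hxH => ⟨hxH, hea.trans hx.2.1⟩
    · rw [Finset.filter_insert, if_neg fun h => hnb h.2]
      exact h.filter_mem a b hab

/-- Adding an element that opens a new block. -/
theorem insert_insert (hG : IsHereditary G) (h : IsPartition G N H)
    (hn : ∀ m ∈ H, m < n) (hnG : {n} ∈ G) :
    IsPartition G (insert n N) (insert n H) where
  subset := Finset.insert_subset_insert n h.subset
  exists_le x hx := by
    rcases Finset.mem_insert.1 hx with rfl | hx
    · exact ⟨x, Finset.mem_insert_self _ _, le_rfl⟩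
    · obtain ⟨m, hm, hmx⟩ := h.exists_le x hx
      exact ⟨m, Finset.mem_insert_of_mem hm, hmx⟩
  filter_mem a b hab := by
    by_cases hnb : n ≤ b
    · refine hG _ hnG _ fun x hx => ?_
      have hna : n ≤ a := by
        by_contra! han
        exact ((hab n (Finset.mem_insert_self _ _) han).trans_le hnb).false
      simp only [Finset.mem_filter, Finset.mem_insert, Finset.mem_singleton] at hx ⊢
      exact hx.1.resolve_right fun hxH => ((hn x hxH).trans_le (hna.trans hx.2.1)).false
    · rw [Finset.filter_insert, if_neg fun h => hnb h.2]
      exact h.filter_mem a b fun x hx => hab x (Finset.mem_insert_of_mem hx)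

theorem singleton_mem (h : IsPartition G N H) {x : ℕ} (hx : x ∈ H) : {x} ∈ G := by
  convert h.filter_mem x x fun _ _ h => h using 1
  ext y
  simp only [Finset.mem_filter, Finset.mem_singleton]
  exact ⟨fun h => by subst h; exact ⟨hx, le_rfl, le_rfl⟩, fun h => le_antisymm h.2.2 h.2.1⟩

theorem nonempty (h : IsPartition G N H) (hH : H.Nonempty) : N.Nonempty := by
  obtain ⟨x, hx⟩ := hH
  obtain ⟨m, hm, -⟩ := h.exists_le x hx
  exact ⟨m, hm⟩

end IsPartition

theorem exists_isGreatest {N : Finset ℕ} (hN : N.Nonempty) :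
    ∃ e, IsGreatest (N : Set ℕ) e :=
  ⟨_, N.isGreatest_max' hN⟩

theorem isGreatest_insert_of_lt {N : Finset ℕ} {n : ℕ} (hn : ∀ m ∈ N, m < n) :
    IsGreatest ((insert n N : Finset ℕ) : Set ℕ) n := by
  refine ⟨by simp, fun x hx => ?_⟩
  rcases Finset.mem_insert.1 (Finset.mem_coe.1 hx) with rfl | hx
  exacts [le_rfl, (hn x hx).le]

/-- A partition is greedy if no block can be prolonged by the minimum of the next one. -/
structure IsGreedyPartition (G : Set (Finset ℕ)) (M H : Finset ℕ) : Prop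
    extends IsPartition G M H where
  filter_notMem : ∀ a ∈ M, ∀ b ∈ M, a < b → H.filter (fun x => a ≤ x ∧ x ≤ b) ∉ G

namespace IsGreedyPartition

variable {F G : Set (Finset ℕ)} {M N H : Finset ℕ} {e n : ℕ}

theorem singleton (hG : IsHereditary G) (hn : {n} ∈ G) : IsGreedyPartition G {n} {n} where
  toIsPartition := .singleton hG hn
  filter_notMem a ha b hb hab := by
    rw [Finset.mem_singleton] at ha hb
    lia

/-- The minima of the greedy partition dominate those of any other partition. -/
theorem mem_of_isPartition (hspr : IsSpreading F) (hher : IsHereditary F)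
    (hM : IsGreedyPartition G M H) (hN : IsPartition G N H) (hNF : N ∈ F) : M ∈ F := by
  have key : ∀ m ∈ M, ∃ y, IsGreatest {x | x ∈ N ∧ x ≤ m} y := fun m hm => by
    obtain ⟨y, hy, hym⟩ := hN.exists_le m (hM.subset hm)
    obtain ⟨e, he⟩ := exists_isGreatest (N := N.filter (· ≤ m)) ⟨y, by simp [hy, hym]⟩
    exact ⟨e, by simpa using he⟩
  choose! g hg using key
  have hmono : StrictMonoOn g (M : Set ℕ) := by
    intro a ha b hb hab
    by_contra! hle
    refine hM.filter_notMem a ha b hb hab (hN.filter_mem a b fun x hx hax => ?_)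
    by_contra! hxb
    exact (((hg b hb).2 ⟨hx, hxb⟩).trans (hle.trans (hg a ha).1.2)).not_gt hax
  have hleft : ∀ m ∈ M, Function.invFunOn g (M : Set ℕ) (g m) = m :=
    fun m hm => hmono.injOn.leftInvOn_invFunOn hm
  have himage : M.image g ∈ F := hher _ hNF _ fun x hx => by
    obtain ⟨m, hm, rfl⟩ := Finset.mem_image.1 hx
    exact (hg m hm).1.1
  have h := hspr _ himage (Function.invFunOn g (M : Set ℕ)) ?_ ?_
  · rw [Finset.image_image] at h
    convert h using 1
    exact (Finset.image_id.symm.trans (Finset.image_congr fun m hm => (hleft m hm).symm))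
  · intro x hx y hy hxy
    obtain ⟨a, ha, rfl⟩ := Finset.mem_image.1 (Finset.mem_coe.1 hx)
    obtain ⟨b, hb, rfl⟩ := Finset.mem_image.1 (Finset.mem_coe.1 hy)
    rw [hleft a ha, hleft b hb]
    exact (hmono.lt_iff_lt ha hb).1 hxy
  · intro x hx
    obtain ⟨a, ha, rfl⟩ := Finset.mem_image.1 hx
    rw [hleft a ha]
    exact (hg a ha).1.2

theorem insert_cases (hG : IsHereditary G) (h : IsGreedyPartition G M H)
    (he : IsGreatest (M : Set ℕ) e) (hn : ∀ m ∈ H, m < n) (hnG : {n} ∈ G) :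
    (insert n (H.filter (e ≤ ·)) ∈ G ∧ IsGreedyPartition G M (insert n H)) ∨
      IsGreedyPartition G (insert n M) (insert n H) := by
  have hnot : ∀ a ∈ M, ∀ b ∈ M, a < b →
      (insert n H).filter (fun x => a ≤ x ∧ x ≤ b) ∉ G := fun a ha b hb hab => by
    rw [Finset.filter_insert, if_neg fun h' => ((hn b (h.subset hb)).trans_le h'.2).false]
    exact h.filter_notMem a ha b hb hab
  by_cases hmem : insert n (H.filter (e ≤ ·)) ∈ G
  · exact .inl ⟨hmem, h.insert_of_mem hG he hn hmem, hnot⟩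
  · refine .inr ⟨h.insert_insert hG hn hnG, fun a ha b hb hab hab' => ?_⟩
    have han : a ≠ n := by
      rintro rfl
      rcases Finset.mem_insert.1 hb with rfl | hb
      exacts [hab.false, (hn b (h.subset hb)).not_gt hab]
    have haM := (Finset.mem_insert.1 ha).resolve_left han
    rcases Finset.mem_insert.1 hb with rfl | hb
    · refine hmem (hG _ hab' _ fun x hx => ?_)
      have hea := he.2 haM
      simp only [Finset.mem_filter, Finset.mem_insert] at hx ⊢
      rcases hx with rfl | ⟨hx, hex⟩
      · exact ⟨.inl rfl, hab.le, le_rfl⟩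
      · exact ⟨.inr hx, hea.trans hex, (hn x hx).le⟩
    · exact hnot a haM b hb hab hab'

theorem exists_of_singleton_mem (hG : IsHereditary G) (hH : H.Nonempty)
    (h : ∀ x ∈ H, {x} ∈ G) : ∃ M, IsGreedyPartition G M H := by
  induction H using Finset.induction_on_max with
  | empty => simp at hH
  | insert n s hn ih =>
    have hnG := h n (Finset.mem_insert_self _ _)
    rcases s.eq_empty_or_nonempty with rfl | hs
    · exact ⟨{n}, singleton hG hnG⟩
    · obtain ⟨M, hM⟩ := ih hs fun x hx => h x (Finset.mem_insert_of_mem hx)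
      obtain ⟨e, he⟩ := exists_isGreatest (hM.nonempty hs)
      rcases hM.insert_cases hG he hn hnG with h' | h'
      exacts [⟨_, h'.2⟩, ⟨_, h'⟩]

end IsGreedyPartition

section partitionList

variable {G : Set (Finset ℕ)}

theorem isPartition_of_pairwise (hG : IsHereditary G) (hempty : ∅ ∈ G)
    (l : List {E : Finset ℕ // E.Nonempty}) (hl : ∀ E ∈ l, (E : Finset ℕ) ∈ G)
    (hlt : l.Pairwise fun E E' : {E : Finset ℕ // E.Nonempty} => ∀ m ∈ E.1, ∀ n ∈ E'.1, m < n) :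
    IsPartition G (l.map fun E => E.1.min' E.2).toFinset
      (l.foldr (fun E acc => E.1 ∪ acc) ∅) := by
  induction l with
  | nil => exact ⟨by simp, by simp, by simpa using hempty⟩
  | cons E l ih =>
    rw [List.pairwise_cons] at hlt
    have ih := ih (fun E' hE' => hl E' (List.mem_cons_of_mem _ hE')) hlt.2
    have hfoldr (l : List {E : Finset ℕ // E.Nonempty}) (x : ℕ) :
        x ∈ l.foldr (fun E acc => E.1 ∪ acc) ∅ → ∃ E ∈ l, x ∈ E.1 := by
      induction l with
      | nil => simp
      | cons E l ih =>
        simp only [List.foldr_cons, Finset.mem_union, List.mem_cons]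
        rintro (h | h)
        · exact ⟨E, .inl rfl, h⟩
        · obtain ⟨E', hE', h⟩ := ih h
          exact ⟨E', .inr hE', h⟩
    have hEl : ∀ m ∈ E.1, ∀ x ∈ l.foldr (fun E acc => E.1 ∪ acc) ∅, m < x := fun m hm x hx => by
      obtain ⟨E', hE', hx⟩ := hfoldr l x hx
      exact hlt.1 E' hE' m hm x hx
    rw [List.map_cons, List.toFinset_cons, List.foldr_cons]
    refine ⟨?_, fun x hx => ?_, fun a b hab => ?_⟩
    · refine Finset.insert_subset (Finset.mem_union_left _ (E.1.min'_mem E.2)) ?_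
      exact ih.subset.trans Finset.subset_union_right
    · rcases Finset.mem_union.1 hx with hx | hx
      · exact ⟨_, Finset.mem_insert_self _ _, E.1.min'_le x hx⟩
      · obtain ⟨m, hm, hmx⟩ := ih.exists_le x hx
        exact ⟨m, Finset.mem_insert_of_mem hm, hmx⟩
    · by_cases h : ∃ x ∈ l.foldr (fun E acc => E.1 ∪ acc) ∅, a ≤ x ∧ x ≤ b
      · obtain ⟨x, hx, hax, hxb⟩ := h
        obtain ⟨m, hm, hmx⟩ := ih.exists_le x hx
        have hma : m ≤ a := by
          by_contra! ham
          exact ((hab m (Finset.mem_insert_of_mem hm) ham).trans_le (hmx.trans hxb)).false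
        convert ih.filter_mem a b fun x hx => hab x (Finset.mem_insert_of_mem hx) using 1
        rw [Finset.filter_union, Finset.union_eq_right]
        intro y hy
        rw [Finset.mem_filter] at hy
        exact absurd (hEl y hy.1 m (ih.subset hm)) (hma.trans hy.2.1).not_gt
      · refine hG _ (hl E List.mem_cons_self) _ fun y hy => ?_
        rw [Finset.mem_filter, Finset.mem_union] at hy
        exact hy.1.resolve_right fun hy' => h ⟨y, hy', hy.2⟩

theorem IsPartition.exists_list (hG : IsHereditary G) {N H : Finset ℕ} (h : IsPartition G N H) :
    ∃ l : List {E : Finset ℕ // E.Nonempty}, (∀ E ∈ l, (E : Finset ℕ) ∈ G) ∧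
      (l.Pairwise fun E E' : {E : Finset ℕ // E.Nonempty} => ∀ m ∈ E.1, ∀ n ∈ E'.1, m < n) ∧
      (l.map fun E => E.1.min' E.2).toFinset = N ∧
      l.foldr (fun E acc => E.1 ∪ acc) ∅ = H := by
  induction N using Finset.induction_on_min generalizing H with
  | empty =>
    have hH : H = ∅ := Finset.eq_empty_of_forall_notMem fun x hx => by
      simpa using h.exists_le x hx
    exact ⟨[], by simp [hH]⟩
  | insert a s ha ih =>
    have hle : ∀ x ∈ H, a ≤ x := fun x hx => by
      obtain ⟨m, hm, hmx⟩ := h.exists_le x hx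
      rcases Finset.mem_insert.1 hm with rfl | hm
      exacts [hmx, (ha m hm).le.trans hmx]
    have haH : a ∈ H := h.subset (Finset.mem_insert_self _ _)
    have hs : IsPartition G s (H.filter fun x => ∃ y ∈ s, y ≤ x) := by
      refine ⟨fun y hy => ?_, fun x hx => (Finset.mem_filter.1 hx).2, fun b c hbc => ?_⟩
      · exact Finset.mem_filter.2 ⟨h.subset (Finset.mem_insert_of_mem hy), y, hy, le_rfl⟩
      · by_cases hab : a ≤ b
        · refine hG _ (h.filter_mem b c fun x hx hbx => ?_) _
            (Finset.filter_subset_filter _ (Finset.filter_subset _ _))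
          rcases Finset.mem_insert.1 hx with rfl | hx
          exacts [absurd hab hbx.not_ge, hbc x hx hbx]
        · refine hG _ (h.filter_mem a a fun _ _ h => h) _ fun x hx => ?_
          simp only [Finset.mem_filter] at hx
          obtain ⟨⟨hxH, y, hy, hyx⟩, -, hxc⟩ := hx
          have := hbc y hy ((not_le.1 hab).trans (ha y hy))
          lia
    obtain ⟨l, hlG, hlt, hmin, hunion⟩ := ih hs
    have hmem : ∀ E ∈ l, ∀ x ∈ E.1, x ∈ H.filter fun x => ∃ y ∈ s, y ≤ x := by
      rw [← hunion]
      clear * -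
      induction l with
      | nil => simp
      | cons E l ih =>
        simp only [List.mem_cons, List.foldr_cons, Finset.mem_union]
        rintro E' (rfl | hE') x hx
        exacts [.inl hx, .inr (ih E' hE' x hx)]
    have haE : a ∈ H.filter fun x => ∀ y ∈ s, x < y := Finset.mem_filter.2 ⟨haH, ha⟩
    have hEG : (H.filter fun x => ∀ y ∈ s, x < y) ∈ G := by
      refine hG _ (h.filter_mem a ((H.filter fun x => ∀ y ∈ s, x < y).sup id)
        fun x hx hax => ?_) _ fun x hx => ?_
      · have hxs := (Finset.mem_insert.1 hx).resolve_left hax.ne'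
        refine (Finset.sup_lt_iff (lt_of_le_of_lt bot_le hax)).2 fun y hy => ?_
        exact (Finset.mem_filter.1 hy).2 x hxs
      · have hxH := (Finset.mem_filter.1 hx).1
        exact Finset.mem_filter.2 ⟨hxH, hle x hxH, Finset.le_sup (f := id) hx⟩
    refine ⟨⟨_, a, haE⟩ :: l, ?_, ?_, ?_, ?_⟩
    · simp only [List.mem_cons]
      rintro E (rfl | hE)
      exacts [hEG, hlG E hE]
    · refine List.pairwise_cons.2 ⟨fun E hE m hm x hx => ?_, hlt⟩
      obtain ⟨-, y, hy, hyx⟩ := Finset.mem_filter.1 (hmem E hE x hx)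
      exact ((Finset.mem_filter.1 hm).2 y hy).trans_le hyx
    · rw [List.map_cons, List.toFinset_cons, hmin]
      congr 1
      exact le_antisymm (Finset.min'_le _ _ haE)
        (Finset.le_min' _ _ _ fun y hy => hle y (Finset.mem_filter.1 hy).1)
    · rw [List.foldr_cons, hunion, ← Finset.filter_or, Finset.filter_true_of_mem]
      intro x _
      by_contra! hx
      obtain ⟨⟨y, hy, hyx⟩, h⟩ := hx
      exact (h y hy).not_ge hyx

end partitionList

theorem mem_famProd_iff {F G : Set (Finset ℕ)} (hG : IsHereditary G) {H : Finset ℕ} :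
    H ∈ famProd F G ↔ H.Nonempty ∧ ∃ N ∈ F, IsPartition G N H := by
  have : Trans (fun E E' : {E : Finset ℕ // E.Nonempty} => ∀ m ∈ E.1, ∀ n ∈ E'.1, m < n)
      (fun E E' : {E : Finset ℕ // E.Nonempty} => ∀ m ∈ E.1, ∀ n ∈ E'.1, m < n)
      (fun E E' : {E : Finset ℕ // E.Nonempty} => ∀ m ∈ E.1, ∀ n ∈ E'.1, m < n) :=
    ⟨fun {_ E _} h h' m hm n hn => by
      obtain ⟨k, hk⟩ := E.2
      exact (h m hm k hk).trans (h' k hk n hn)⟩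
  have hcoe (l : List {E : Finset ℕ // E.Nonempty}) : (do let a ← l; pure a.1) =
      l.map fun E => E.1 := by
    simp [List.map_eq_flatMap]
  constructor
  · rintro ⟨l, hne, hlG, hlt, hF, rfl⟩
    rw [List.Chain', hcoe, List.isChain_map] at hlt
    obtain ⟨E, l, rfl⟩ := List.exists_cons_of_ne_nil hne
    have hEG := hlG E List.mem_cons_self
    refine ⟨?_, _, hF, isPartition_of_pairwise hG (hG _ hEG _ (Finset.empty_subset _)) _ hlG
      (List.isChain_iff_pairwise.1 hlt)⟩
    rw [List.foldr_cons]
    exact E.2.mono Finset.subset_union_left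
  · rintro ⟨hH, N, hN, h⟩
    obtain ⟨l, hlG, hlt, rfl, rfl⟩ := h.exists_list hG
    refine ⟨l, ?_, hlG, ?_, hN, rfl⟩
    · rintro rfl
      simp at hH
    · rw [List.Chain', hcoe, List.isChain_map]
      exact hlt.isChain

section famProd

variable {F G : Set (Finset ℕ)} [IsWellFounded (Finset ℕ) (IsChild F)]
  [IsWellFounded (Finset ℕ) (IsChild G)] {M H : Finset ℕ} {e : ℕ} {ξ : Ordinal.{u}}

/-- The rank in the tree of `famProd F G` of a set with minima `M` and last block `E`. -/
noncomputable def prodRank (F G : Set (Finset ℕ)) [IsWellFounded (Finset ℕ) (IsChild F)]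
    [IsWellFounded (Finset ℕ) (IsChild G)] (M E : Finset ℕ) : Ordinal.{u} :=
  treeRank G ∅ * treeRank F M + treeRank G E

theorem prodRank_lt {E : Finset ℕ} {α : Ordinal.{u}} (hG : IsHereditary G) (hE : E ∈ G)
    (hne : E.Nonempty) (h : treeRank F M < α) : prodRank F G M E < treeRank G ∅ * α := by
  calc prodRank F G M E < treeRank G ∅ * treeRank F M + treeRank G ∅ :=
        (add_lt_add_iff_left _).2 (treeRank_lt_treeRank_empty hG hE hne)
    _ = treeRank G ∅ * (treeRank F M + 1) := by rw [mul_add, mul_one]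
    _ ≤ _ := mul_le_mul_right (Order.add_one_le_iff.2 h) _

theorem le_prodRank_of_mem_famIter (hFs : IsSpreading F) (hF : IsHereditary F)
    (hG : IsHereditary G) (hM : IsGreedyPartition G M H) (he : IsGreatest (M : Set ℕ) e)
    (hH : H ∈ famIter (famProd F G) ξ) : ξ ≤ prodRank F G M (H.filter (e ≤ ·)) := by
  induction ξ using WellFoundedLT.induction generalizing M H e with
  | ind ξ ih =>
  refine le_of_forall_lt fun ζ hζ => ?_
  obtain ⟨n, hn, hnζ⟩ := ((mem_famIter_iff _ _ _).1 hH).2 ζ hζ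
  obtain ⟨-, N, hNF, hN⟩ := (mem_famProd_iff hG).1 ((mem_famIter_iff _ _ _).1 hnζ).1
  have hnG := hN.singleton_mem (Finset.mem_insert_self n H)
  have heH := hM.subset he.1
  rcases hM.insert_cases hG he hn hnG with ⟨hmem, h⟩ | h
  · refine (ih ζ hζ h he hnζ).trans_lt ?_
    rw [Finset.filter_insert, if_pos (hn e heH).le]
    exact (add_lt_add_iff_left _).2
      (treeRank_insert_lt (fun m hm => hn m (Finset.mem_filter.1 hm).1) hmem)
  · have hnM : ∀ m ∈ M, m < n := fun m hm => hn m (hM.subset hm)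
    have hgr := isGreatest_insert_of_lt hnM
    refine (ih ζ hζ h hgr hnζ).trans_lt (lt_of_lt_of_le (prodRank_lt hG (h.lastBlock_mem hgr)
      ⟨n, by simp⟩ (treeRank_insert_lt hnM (h.mem_of_isPartition hFs hF hN hNF))) ?_)
    exact le_self_add

/-- Below `treeRank G ∅ * treeRank F M`, ranks are attained by opening a new block. -/
theorem exists_le_prodRank_insert (hF : IsSpreading F) (hG : IsSpreading G) (k : ℕ)
    (h : ξ < treeRank G ∅ * treeRank F M) :
    ∃ n, k ≤ n ∧ (∀ m ∈ M, m < n) ∧ insert n M ∈ F ∧ {n} ∈ G ∧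
      ξ ≤ prodRank F G (insert n M) {n} := by
  have h0 : treeRank.{u} G ∅ ≠ 0 := by
    rintro h0
    simp [h0] at h
  obtain ⟨a, ha, haF, hdiv⟩ := exists_le_treeRank_insert ((Ordinal.lt_mul_iff_div_lt h0).1 h)
  obtain ⟨b, hb, hbG, hmod⟩ := exists_le_treeRank_insert (Ordinal.mod_lt ξ h0)
  obtain ⟨haF', ha'⟩ := hF.insert_mono.{u} ha (le_max_left a (max b k)) haF
  obtain ⟨hbG', hb'⟩ := hG.insert_mono.{u} hb
    ((le_max_left b k).trans (le_max_right a (max b k))) hbG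
  refine ⟨max a (max b k), by lia, fun m hm => (ha m hm).trans_le (le_max_left _ _), haF',
    hbG', ?_⟩
  rw [← Ordinal.div_add_mod ξ (treeRank G ∅)]
  exact add_le_add (mul_le_mul_right (hdiv.trans ha') _) (hmod.trans hb')

theorem mem_famIter_of_le_prodRank (hFs : IsSpreading F) (hGs : IsSpreading G)
    (hG : IsHereditary G) (hMF : M ∈ F) (hM : IsPartition G M H) (he : IsGreatest (M : Set ℕ) e)
    (hξ : ξ ≤ prodRank F G M (H.filter (e ≤ ·))) : H ∈ famIter (famProd F G) ξ := by
  induction ξ using WellFoundedLT.induction generalizing M H e with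
  | ind ξ ih =>
  have heH := hM.subset he.1
  refine (mem_famIter_iff _ _ _).2 ⟨(mem_famProd_iff hG).2 ⟨⟨e, heH⟩, M, hMF, hM⟩, fun ζ hζ => ?_⟩
  rcases lt_or_ge ζ (treeRank G ∅ * treeRank F M) with hlt | hge
  · obtain ⟨n, hkn, hnM, hnF, hnG, hle⟩ := exists_le_prodRank_insert hFs hGs (H.sup id + 1) hlt
    have hn : ∀ m ∈ H, m < n := fun m hm =>
      (Nat.lt_succ_of_le (Finset.le_sup (f := id) hm)).trans_le hkn
    refine ⟨n, hn, ih ζ hζ hnF (hM.insert_insert hG hn hnG) (isGreatest_insert_of_lt hnM) ?_⟩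
    rwa [Finset.filter_insert, if_pos le_rfl,
      Finset.filter_false_of_mem fun m hm => (hn m hm).not_ge]
  · have hγ : ζ - treeRank G ∅ * treeRank F M < treeRank G (H.filter (e ≤ ·)) := by
      rw [← add_lt_add_iff_left (treeRank G ∅ * treeRank F M),
        Ordinal.add_sub_cancel_of_le hge]
      exact hζ.trans_le hξ
    obtain ⟨n, hnE, hnG, hle⟩ := exists_le_treeRank_insert hγ
    have hen := hnE e (by simp [heH])
    have hn : ∀ m ∈ H, m < n := fun m hm => by
      rcases lt_or_ge m e with h | h
      exacts [h.trans hen, hnE m (by simp [hm, h])]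
    refine ⟨n, hn, ih ζ hζ hMF (hM.insert_of_mem hG he hn hnG) he ?_⟩
    rw [Finset.filter_insert, if_pos hen.le, ← Ordinal.add_sub_cancel_of_le hge]
    exact (add_le_add_iff_left _).2 hle

end famProd

/-- For regular families `𝒻, 𝒢`: `ι(𝒻[𝒢]) = ι(𝒢) · ι(𝒻)`. -/
theorem famIota_famProd (F G : Set (Finset ℕ)) (hF : IsRegularFamily F)
    (hG : IsRegularFamily G) :
    famIota (famProd F G) = famIota G * famIota F := by
  have := isWellFounded_isChild hF.1
  have := isWellFounded_isChild hG.1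
  obtain ⟨-, hFs, hFh⟩ := hF
  obtain ⟨-, hGs, hGh⟩ := hG
  rw [famIota_eq_treeRank_empty hFh, famIota_eq_treeRank_empty hGh]
  refine (congrArg sInf (Set.ext fun ξ => ?_)).trans csInf_Ici
  change famIter (famProd F G) ξ ⊆ {∅} ↔ treeRank G ∅ * treeRank F ∅ ≤ ξ
  constructor
  · intro h
    by_contra! hlt
    obtain ⟨n, -, -, hnF, hnG, hle⟩ := exists_le_prodRank_insert hFs hGs 0 hlt
    refine Finset.singleton_ne_empty n (h (mem_famIter_of_le_prodRank hFs hGs hGh hnF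
      (.singleton hGh hnG) (isGreatest_insert_of_lt (by simp)) ?_))
    rwa [Finset.filter_true_of_mem (by simp)]
  · intro h H hH
    obtain ⟨hne, N, hNF, hN⟩ := (mem_famProd_iff hGh).1 ((mem_famIter_iff _ _ _).1 hH).1
    obtain ⟨M, hM⟩ := IsGreedyPartition.exists_of_singleton_mem hGh hne
      fun x hx => hN.singleton_mem hx
    have hMne := hM.nonempty hne
    obtain ⟨e, he⟩ := exists_isGreatest hMne
    have hMF := hM.mem_of_isPartition hFs hFh hN hNF
    have hle := le_prodRank_of_mem_famIter hFs hFh hGh hM he hH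
    exact absurd (h.trans hle) (prodRank_lt hGh (hM.lastBlock_mem he)
      ⟨e, by simpa using hM.subset he.1⟩ (treeRank_lt_treeRank_empty hFh hMF hMne)).not_ge
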